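/- arXiv:1907.07513 — 3 statements merged into one kernel-verified Lean document; each statement's English description precedes it below -/
import Mathlib

section
/- For every intolerance parameter τ ∈ (0,1), there exist a finite simple graph G = (V,E), a set A of agents with |A| = |V| partitioned into three types, and a bijective placement p₀ : A → V such that no finite sequence of improving swaps of the one-versus-one swap Schelling game (1-1-SSG) with parameter τ starting from p₀ ends in a swap-stable placement; in particular, the 1-1-SSG is not weakly acyclic on arbitrary networks for any τ ∈ (0,1). -/
open Finset
open scoped Classical

noncomputable section

namespace Schelling

variable {V A : Type*} [Fintype V] [Fintype A] {k : ℕ}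

/-- The set of neighbors of agent `a` under placement `p`. -/
def nbrs (G : SimpleGraph V) (p : A → V) (a : A) : Finset A :=
  Finset.univ.filter fun b => G.Adj (p a) (p b)

/-- `|N⁺_p(a)|`: the number of neighbors of `a` under `p` having the same type as `a`. -/
def posCount (G : SimpleGraph V) (t : A → Fin k) (p : A → V) (a : A) : ℕ :=
  (Finset.univ.filter fun b => G.Adj (p a) (p b) ∧ t b = t a).card

/-- One-versus-all `|N⁻_p(a)|`: the number of neighbors of `a` whose type differs from `t a`. -/
def negCountAll (G : SimpleGraph V) (t : A → Fin k) (p : A → V) (a : A) : ℕ :=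
  (Finset.univ.filter fun b => G.Adj (p a) (p b) ∧ t b ≠ t a).card

/-- One-versus-one `|N⁻_p(a)|`: the size of a largest set of neighbors of `a`
of one common type different from `t a`. -/
def negCountOne (G : SimpleGraph V) (t : A → Fin k) (p : A → V) (a : A) : ℕ :=
  (Finset.univ.filter fun T : Fin k => T ≠ t a).sup fun T =>
    (Finset.univ.filter fun b => G.Adj (p a) (p b) ∧ t b = T).card

/-- The cost of agent `a` in the one-versus-all version. -/
def costAll (G : SimpleGraph V) (t : A → Fin k) (τ : ℝ) (p : A → V) (a : A) : ℝ :=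
  if nbrs G p a = ∅ then τ
  else max 0 (τ - (posCount G t p a : ℝ) /
    ((posCount G t p a : ℝ) + (negCountAll G t p a : ℝ)))

/-- The cost of agent `a` in the one-versus-one version. -/
def costOne (G : SimpleGraph V) (t : A → Fin k) (τ : ℝ) (p : A → V) (a : A) : ℝ :=
  if nbrs G p a = ∅ then τ
  else max 0 (τ - (posCount G t p a : ℝ) /
    ((posCount G t p a : ℝ) + (negCountOne G t p a : ℝ)))

/-- A swap of the (distinct) agents `a` and `b` turning placement `p` into `q`,
which strictly decreases the cost of both agents (cost function `c`). -/
def SwapMove (c : (A → V) → A → ℝ) (p q : A → V) (a b : A) : Prop :=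
  a ≠ b ∧ q = p ∘ (Equiv.swap a b) ∧ c q a < c p a ∧ c q b < c p b

/-- `q` is obtained from `p` by an improving swap. -/
def ImprovingSwap (c : (A → V) → A → ℝ) (p q : A → V) : Prop :=
  ∃ a b, SwapMove c p q a b

/-- A placement is swap-stable if it admits no improving swap. -/
def SwapStable (c : (A → V) → A → ℝ) (p : A → V) : Prop :=
  ∀ q, ¬ ImprovingSwap c p q

/-- Some finite sequence of improving swaps starting at `p₀` ends in a swap-stable placement. -/
def ReachesStableSwap (c : (A → V) → A → ℝ) (p₀ : A → V) : Prop :=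
  ∃ (n : ℕ) (q : ℕ → A → V), q 0 = p₀ ∧
    (∀ i < n, ImprovingSwap c (q i) (q (i + 1))) ∧ SwapStable c (q n)

/-- A jump of agent `a` to the node `v` (unoccupied under `p`) turning placement `p`
into `q`, which strictly decreases the cost of `a` (cost function `c`). -/
def JumpMove (c : (A → V) → A → ℝ) (p q : A → V) (a : A) (v : V) : Prop :=
  (∀ b, p b ≠ v) ∧ q = Function.update p a v ∧ c q a < c p a

/-- `q` is obtained from `p` by an improving jump. -/
def ImprovingJump (c : (A → V) → A → ℝ) (p q : A → V) : Prop :=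
  ∃ a v, JumpMove c p q a v

/-- A placement is jump-stable if it admits no improving jump. -/
def JumpStable (c : (A → V) → A → ℝ) (p : A → V) : Prop :=
  ∀ q, ¬ ImprovingJump c p q

/-- Some finite sequence of improving jumps starting at `p₀` ends in a jump-stable placement. -/
def ReachesStableJump (c : (A → V) → A → ℝ) (p₀ : A → V) : Prop :=
  ∃ (n : ℕ) (q : ℕ → A → V), q 0 = p₀ ∧
    (∀ i < n, ImprovingJump c (q i) (q (i + 1))) ∧ JumpStable c (q n)

/-- The placement cost: the number of discontent agents (one-versus-all cost). -/
def placementCost (G : SimpleGraph V) (t : A → Fin k) (τ : ℝ) (p : A → V) : ℕ :=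
  (Finset.univ.filter fun a => costAll G t τ p a ≠ 0).card

/-- A graph is `Δ`-regular if every node has exactly `Δ` neighbors. -/
def IsRegular (G : SimpleGraph V) (Δ : ℕ) : Prop :=
  ∀ v : V, (Finset.univ.filter fun u => G.Adj v u).card = Δ

/-- A mobile location: pair index and high/low flag. -/
abbrev Mob := Fin 3 × Bool

/-- Nodes: mobile locations and static nodes. -/
abbrev Nd (M : ℕ) := Mob ⊕ (Fin 3 × Fin M)

/-- The unique mobile neighbor of a mobile location. -/
def mate (u : Mob) : Mob := if u.2 = true then (u.1 - 1, false) else (u.1 + 1, true)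

lemma mate_mate (u : Mob) : mate (mate u) = u := by
  obtain ⟨i, x⟩ := u
  cases x <;> simp [mate]

lemma mate_fst (u : Mob) : (mate u).1 ≠ u.1 := by
  obtain ⟨i, x⟩ := u
  cases x <;> fin_cases i <;> simp [mate]

/-- Scale of a location. -/
def kk (u : Mob) : ℕ := if u.2 = true then 1 else 3

/-- Number of static neighbors of either mobile type. -/
def bs (u : Mob) : ℕ := if u.2 = true then u.1.val else 3 * u.1.val + 1

/-- Number of static neighbors of type `T`. -/
def st (b : ℕ) (u : Mob) (T : Fin 3) : ℕ := if T = 0 then kk u * b else bs u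

/-- The graph's adjacency. -/
def adj (b M : ℕ) : Nd M → Nd M → Prop
  | .inl u, .inl v => v = mate u
  | .inl u, .inr x => x.2.val < st b u x.1
  | .inr x, .inl u => x.2.val < st b u x.1
  | .inr x, .inr y => x.1 = y.1 ∧ x.2 ≠ y.2

/-- The graph. -/
def GG (b M : ℕ) : SimpleGraph (Nd M) where
  Adj := adj b M
  symm := ⟨by
    rintro (u | x) (v | y) h
    · simp only [adj] at h ⊢; rw [h, mate_mate]
    · exact h
    · exact h
    · exact ⟨h.1.symm, h.2.symm⟩⟩
  loopless := ⟨by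
    rintro (u | x) h
    · simp only [adj] at h
      exact mate_fst u (by rw [← h])
    · exact h.2 rfl⟩

lemma GG_ll {b M : ℕ} (u v : Mob) : (GG b M).Adj (.inl u) (.inl v) ↔ v = mate u := Iff.rfl

lemma GG_lr {b M : ℕ} (u : Mob) (x : Fin 3 × Fin M) :
    (GG b M).Adj (.inl u) (.inr x) ↔ x.2.val < st b u x.1 := Iff.rfl

lemma GG_rr {b M : ℕ} (x y : Fin 3 × Fin M) :
    (GG b M).Adj (.inr x) (.inr y) ↔ x.1 = y.1 ∧ x.2 ≠ y.2 := Iff.rfl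

/-- Well-formed colorings. -/
def WF {M : ℕ} (c : Nd M → Fin 3) : Prop :=
  (∀ x, c (.inr x) = x.1) ∧ ∀ u, c (.inl u) ≠ 0

/-- Good colorings. -/
def Good {M : ℕ} (c : Nd M → Fin 3) : Prop :=
  WF c ∧ ∀ i, c (.inl (i, true)) ≠ c (.inl (i, false))

lemma cnt_mob {b M : ℕ} (hM : ∀ u T, st b u T ≤ M) (c : Nd M → Fin 3)
    (hc : ∀ x, c (.inr x) = x.1) (u : Mob) (T : Fin 3) :
    (Finset.univ.filter fun v => (GG b M).Adj (.inl u) v ∧ c v = T).card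
      = st b u T + if c (.inl (mate u)) = T then 1 else 0 := by
  have h : (Finset.univ.filter fun v => (GG b M).Adj (.inl u) v ∧ c v = T)
      = (Finset.univ.filter fun v : Mob => v = mate u ∧ c (.inl v) = T).disjSum
        ((Finset.univ.filter fun m : Fin M => m.val < st b u T).map
          ⟨fun m => (T, m), fun a b h => by simpa using h⟩) := by
    ext (v | ⟨T', m⟩)
    · simp [GG_ll]
    · simp only [GG_lr, hc, Finset.mem_filter, Finset.mem_univ, true_and, Finset.inr_mem_disjSum,
        Finset.mem_map, Function.Embedding.coeFn_mk, Prod.mk.injEq]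
      constructor
      · rintro ⟨h1, rfl⟩
        exact ⟨m, h1, rfl⟩
      · rintro ⟨m', h1, h2⟩
        obtain ⟨rfl, rfl⟩ := Prod.mk.inj h2
        exact ⟨h1, rfl⟩
  rw [h, Finset.card_disjSum, Finset.card_map, add_comm]
  congr 1
  · have := Fin.card_filter_val_lt (n := M) (m := st b u T)
    rw [Nat.min_eq_right (hM u T)] at this
    convert this
  · split_ifs with h1
    · rw [Finset.card_eq_one]
      refine ⟨mate u, ?_⟩
      ext v
      simp only [Finset.mem_filter, Finset.mem_univ, true_and, Finset.mem_singleton]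
      exact ⟨fun h => h.1, fun h => ⟨h, by rw [h, h1]⟩⟩
    · rw [Finset.card_eq_zero, Finset.filter_eq_empty_iff]
      rintro v - ⟨rfl, h⟩
      exact h1 h

lemma ratio_le {n B n' B' : ℝ} (hn : 0 ≤ n) (hn' : 0 ≤ n') (hB : 0 < B) (hB' : 0 < B')
    (h : n * B' ≤ n' * B) : n / (n + B) ≤ n' / (n' + B') := by
  rw [div_le_div_iff₀ (by linarith) (by linarith)]
  nlinarith

lemma ratio_lt {n B n' B' : ℝ} (hn : 0 ≤ n) (hn' : 0 ≤ n') (hB : 0 < B) (hB' : 0 < B')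
    (h : n * B' < n' * B) : n / (n + B) < n' / (n' + B') := by
  rw [div_lt_div_iff₀ (by linarith) (by linarith)]
  nlinarith

/-- number of same-type neighbors -/
def num {M : ℕ} (c : Nd M → Fin 3) (u : Mob) : ℕ :=
  bs u + if c (.inl (mate u)) = c (.inl u) then 1 else 0

lemma kk_pos (u : Mob) : 0 < kk u := by unfold kk; split_ifs <;> omega

lemma bs_lo (u : Mob) : u.1.val * kk u ≤ bs u := by
  unfold kk bs; split_ifs <;> omega

lemma bs_hi (u : Mob) : bs u + 1 ≤ (u.1.val + 1) * kk u := by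
  unfold kk bs; split_ifs <;> omega

lemma num_lo {M : ℕ} (c : Nd M → Fin 3) (u : Mob) : u.1.val * kk u ≤ num c u := by
  have := bs_lo u
  unfold num; omega

lemma num_hi {M : ℕ} (c : Nd M → Fin 3) (u : Mob) : num c u ≤ (u.1.val + 1) * kk u := by
  have := bs_hi u
  unfold num; split_ifs <;> omega

lemma cost_mob {b M : ℕ} (hM : ∀ u T, st b u T ≤ M) (hb : 3 ≤ b) {τ : ℝ}
    (hτ : (3 : ℝ) / (3 + b) ≤ τ) (c : Nd M → Fin 3) (hc : WF c) (u : Mob) :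
    costOne (GG b M) c τ id (.inl u)
      = τ - (num c u : ℝ) / ((num c u : ℝ) + ((kk u * b : ℕ) : ℝ)) := by
  have hpos : posCount (GG b M) c id (.inl u) = num c u := by
    unfold posCount
    simp only [id]
    rw [cnt_mob hM c hc.1 u]
    simp [num, st, hc.2 u]
  have hkb : 0 < kk u * b := Nat.mul_pos (kk_pos u) (by omega)
  have h3 : (u.1.val + 1) ≤ 3 := by omega
  have hle : (u.1.val + 1) * kk u ≤ kk u * b := by
    rw [mul_comm]; exact Nat.mul_le_mul_left _ (by omega)
  have hneg : negCountOne (GG b M) c id (.inl u) = kk u * b := by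
    unfold negCountOne
    simp only [id]
    simp_rw [cnt_mob hM c hc.1 u]
    apply le_antisymm
    · apply Finset.sup_le
      intro T _
      by_cases hT : T = 0
      · subst hT
        simp [st, hc.2]
      · have := bs_hi u
        simp only [st, hT, if_false]
        split_ifs <;> omega
    · refine le_trans ?_ (Finset.le_sup (b := (0 : Fin 3)) ?_)
      · simp [st]
      · simpa using (hc.2 u).symm
  have hne : nbrs (GG b M) id (.inl u) ≠ ∅ := by
    intro h
    have h1 := cnt_mob hM c hc.1 u 0
    have h2 : (Finset.univ.filter fun v => (GG b M).Adj (.inl u) v ∧ c v = 0) = ∅ := by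
      rw [Finset.filter_eq_empty_iff]
      intro v _ hv
      have : v ∈ nbrs (GG b M) id (.inl u) := by simp [nbrs, hv.1]
      rw [h] at this
      simp at this
    rw [h2] at h1
    simp only [st, if_true, Finset.card_empty] at h1
    omega
  unfold costOne
  rw [if_neg hne, hpos, hneg, max_eq_right]
  have hn := num_hi c u
  have hn2 : num c u ≤ 3 * kk u := le_trans hn (Nat.mul_le_mul_right _ h3)
  have : (num c u : ℝ) / ((num c u : ℝ) + ((kk u * b : ℕ) : ℝ)) ≤ 3 / (3 + b) := by
    apply ratio_le (by positivity) (by positivity) (by exact_mod_cast hkb)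
    · have : 0 < b := by omega
      exact_mod_cast this
    · have : num c u * b ≤ 3 * (kk u * b) := by
        rw [← mul_assoc]; exact Nat.mul_le_mul_right _ hn2
      exact_mod_cast this
  linarith

lemma cost_static {b M : ℕ} {τ : ℝ} (h0 : 0 < τ) (h1 : τ < 1)
    (hM : 6 * τ ≤ ((M : ℝ) - 1) * (1 - τ)) (c : Nd M → Fin 3) (hc : WF c) (x : Fin 3 × Fin M) :
    costOne (GG b M) c τ id (.inr x) = 0 := by
  obtain ⟨T, m⟩ := x
  have hpos : M ≤ posCount (GG b M) c id (.inr (T, m)) + 1 := by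
    unfold posCount
    have : ((Finset.univ.erase m).map
        ⟨fun m' => (Sum.inr (T, m') : Nd M), fun a b h => by simpa using h⟩) ⊆
        (Finset.univ.filter fun v => (GG b M).Adj (id (.inr (T, m))) (id v) ∧
          c v = c (.inr (T, m))) := by
      intro v hv
      simp only [Finset.mem_map, Finset.mem_erase, Finset.mem_univ, and_true,
        Function.Embedding.coeFn_mk] at hv
      obtain ⟨m', hm', rfl⟩ := hv
      rw [Finset.mem_filter]
      exact ⟨Finset.mem_univ _, ⟨rfl, Ne.symm hm'⟩, by
        rw [hc.1]; exact hc.1 _⟩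
    have := Finset.card_le_card this
    rw [Finset.card_map, Finset.card_erase_of_mem (Finset.mem_univ _), Finset.card_univ,
      Fintype.card_fin] at this
    have h2 : M ≤ _ + 1 := Nat.sub_le_iff_le_add.mp this
    convert h2
  have hneg : negCountOne (GG b M) c id (.inr (T, m)) ≤ 6 := by
    unfold negCountOne
    apply Finset.sup_le
    intro T' hT'
    have : (Finset.univ.filter fun v => (GG b M).Adj (id (.inr (T, m))) (id v) ∧ c v = T') ⊆
        (Finset.univ : Finset Mob).map ⟨Sum.inl, Sum.inl_injective⟩ := by
      intro v hv
      rcases v with v | y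
      · simp
      · simp [GG_rr, hc.1] at hv hT'
        exact absurd (hv.1.1.trans hv.2).symm hT'
    refine le_trans (Finset.card_le_card this) ?_
    rw [Finset.card_map]
    decide
  have hM1 : (1 : ℝ) < M := by
    by_contra hcon
    push Not at hcon
    nlinarith
  have hpos' : (M : ℝ) - 1 ≤ (posCount (GG b M) c id (.inr (T, m)) : ℝ) := by
    have : (M : ℝ) ≤ (posCount (GG b M) c id (.inr (T, m)) : ℝ) + 1 := by exact_mod_cast hpos
    linarith
  have hneg' : (negCountOne (GG b M) c id (.inr (T, m)) : ℝ) ≤ 6 := by exact_mod_cast hneg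
  have hne : nbrs (GG b M) id (.inr (T, m)) ≠ ∅ := by
    intro h
    have h2 : posCount (GG b M) c id (.inr (T, m)) = 0 := by
      unfold posCount
      rw [Finset.card_eq_zero, Finset.filter_eq_empty_iff]
      intro v _ hv
      have : v ∈ nbrs (GG b M) id (.inr (T, m)) := by simpa [nbrs] using hv.1
      rw [h] at this
      simp at this
    rw [h2] at hpos'
    push_cast at hpos'
    linarith
  unfold costOne
  rw [if_neg hne, max_eq_left]
  have hn0 : (0 : ℝ) ≤ (negCountOne (GG b M) c id (.inr (T, m)) : ℝ) := by positivity
  rw [sub_nonpos, le_div_iff₀ (by linarith)]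
  nlinarith

lemma cost_nonneg {V A : Type*} [Fintype V] [Fintype A] {k : ℕ} (G : SimpleGraph V)
    (t : A → Fin k) {τ : ℝ} (h0 : 0 < τ) (p : A → V) (a : A) : 0 ≤ costOne G t τ p a := by
  unfold costOne
  split_ifs
  · exact h0.le
  · exact le_max_left _ _

/-- Cross-pair moves are never improving for the agent that goes down. -/
lemma cost_cross {b M : ℕ} (hM : ∀ u T, st b u T ≤ M) (hb : 3 ≤ b) {τ : ℝ}
    (hτ : (3 : ℝ) / (3 + b) ≤ τ) (c c' : Nd M → Fin 3) (hc : WF c) (hc' : WF c') (u v : Mob)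
    (huv : v.1 < u.1) :
    costOne (GG b M) c τ id (.inl u) ≤ costOne (GG b M) c' τ id (.inl v) := by
  rw [cost_mob hM hb hτ c hc, cost_mob hM hb hτ c' hc']
  have hbp : 0 < b := by omega
  have : (num c' v : ℝ) / ((num c' v : ℝ) + ((kk v * b : ℕ) : ℝ))
      ≤ (num c u : ℝ) / ((num c u : ℝ) + ((kk u * b : ℕ) : ℝ)) := by
    apply ratio_le (by positivity) (by positivity)
      (by exact_mod_cast Nat.mul_pos (kk_pos v) hbp) (by exact_mod_cast Nat.mul_pos (kk_pos u) hbp)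
    have h1 := num_hi c' v
    have h2 := num_lo c u
    have h3 : v.1.val + 1 ≤ u.1.val := huv
    have h4 : num c' v * (kk u * b) ≤ num c u * (kk v * b) := by
      calc num c' v * (kk u * b) ≤ ((v.1.val + 1) * kk v) * (kk u * b) :=
            Nat.mul_le_mul_right _ h1
        _ ≤ (u.1.val * kk v) * (kk u * b) :=
            Nat.mul_le_mul_right _ (Nat.mul_le_mul_right _ h3)
        _ = (u.1.val * kk u) * (kk v * b) := by ring
        _ ≤ _ := Nat.mul_le_mul_right _ h2
    exact_mod_cast h4
  linarith

lemma fin3_cases {x y z : Fin 3} (hx : x ≠ 0) (hy : y ≠ 0) (hz : z ≠ 0) (h1 : x ≠ y)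
    (h2 : z ≠ x) : z = y := by
  revert x y z; decide

/-- Invariance. -/
lemma good_step {b M : ℕ} (hM : ∀ u T, st b u T ≤ M) (hb : 3 ≤ b) {τ : ℝ}
    (hτ : (3 : ℝ) / (3 + b) ≤ τ) (h0 : 0 < τ) (h1 : τ < 1)
    (hM' : 6 * τ ≤ ((M : ℝ) - 1) * (1 - τ)) (c : Nd M → Fin 3) (hc : Good c) (u v : Nd M)
    (hu : costOne (GG b M) (c ∘ Equiv.swap u v) τ id v < costOne (GG b M) c τ id u)
    (hv : costOne (GG b M) (c ∘ Equiv.swap u v) τ id u < costOne (GG b M) c τ id v) :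
    Good (c ∘ Equiv.swap u v) := by
  rcases u with u | x
  swap
  · rw [cost_static h0 h1 hM' c hc.1] at hu
    exact absurd hu (not_lt.mpr (cost_nonneg _ _ h0 _ _))
  rcases v with v | x
  swap
  · rw [cost_static h0 h1 hM' c hc.1] at hv
    exact absurd hv (not_lt.mpr (cost_nonneg _ _ h0 _ _))
  have hW : WF (c ∘ Equiv.swap (Sum.inl u) (Sum.inl v)) := by
    constructor
    · intro x
      rw [Function.comp, Equiv.swap_apply_of_ne_of_ne (by simp) (by simp)]
      exact hc.1.1 x
    · intro w
      simp only [Function.comp, Equiv.swap_apply_def]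
      split_ifs <;> exact hc.1.2 _
  have huv : u.1 = v.1 := by
    rcases lt_trichotomy u.1 v.1 with h | h | h
    · exact absurd hv (not_lt.mpr (cost_cross hM hb hτ c _ hc.1 hW v u h))
    · exact h
    · exact absurd hu (not_lt.mpr (cost_cross hM hb hτ c _ hc.1 hW u v h))
  refine ⟨hW, fun i => ?_⟩
  have hi := hc.2 i
  obtain ⟨i', x⟩ := u
  obtain ⟨j', y⟩ := v
  simp only at huv
  subst huv
  by_cases hii : i = i'
  · subst hii
    cases x <;> cases y <;> simp [Equiv.swap_apply_def] <;> first | exact hi | exact hi.symm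
  · simp only [Function.comp]
    rw [Equiv.swap_apply_of_ne_of_ne (by simp [hii]) (by simp [hii]),
      Equiv.swap_apply_of_ne_of_ne (by simp [hii]) (by simp [hii])]
    exact hi

/-- Some pair always wants to swap. -/
lemma good_unstable {b M : ℕ} (hM : ∀ u T, st b u T ≤ M) (hb : 3 ≤ b) {τ : ℝ}
    (hτ : (3 : ℝ) / (3 + b) ≤ τ) (c : Nd M → Fin 3) (hc : Good c) :
    ∃ u v : Nd M, u ≠ v ∧
      costOne (GG b M) (c ∘ Equiv.swap u v) τ id v < costOne (GG b M) c τ id u ∧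
      costOne (GG b M) (c ∘ Equiv.swap u v) τ id u < costOne (GG b M) c τ id v := by
  obtain ⟨i, hi⟩ : ∃ i : Fin 3, c (.inl (i, true)) = c (.inl (i - 1, true)) := by
    by_contra hcon
    push Not at hcon
    have a0 := hcon 0
    have a1 := hcon 1
    have a2 := hcon 2
    have e0 : (0 : Fin 3) - 1 = 2 := by decide
    have e1 : (1 : Fin 3) - 1 = 0 := by decide
    have e2 : (2 : Fin 3) - 1 = 1 := by decide
    rw [e0] at a0; rw [e1] at a1; rw [e2] at a2
    exact a2 (fin3_cases (hc.1.2 (0, true)) (hc.1.2 _) (hc.1.2 _) a1.symm a0.symm)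
  have hl : c (.inl (i - 1, false)) = c (.inl (i, false)) :=
    fin3_cases (hc.1.2 (i, true)) (hc.1.2 _) (hc.1.2 _) (hc.2 i)
      (by rw [hi]; exact (hc.2 (i - 1)).symm)
  have hi1 : i - 1 ≠ i := by clear hl hi; revert i; decide
  have hi2 : i + 1 ≠ i := by clear hl hi hi1; revert i; decide
  set c' := c ∘ Equiv.swap (Sum.inl (i, true) : Nd M) (Sum.inl (i, false)) with hc'
  have hW : WF c' := by
    constructor
    · intro x
      rw [hc', Function.comp, Equiv.swap_apply_of_ne_of_ne (by simp) (by simp)]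
      exact hc.1.1 x
    · intro w
      simp only [hc', Function.comp, Equiv.swap_apply_def]
      split_ifs <;> exact hc.1.2 _
  have n1 : num c (i, true) = i.val := by
    have : c (.inl (i - 1, false)) ≠ c (.inl (i, true)) := by rw [hl]; exact (hc.2 i).symm
    simp [num, bs, mate, this]
  have n2 : num c' (i, true) = i.val + 1 := by
    have e1 : c' (.inl (i, true)) = c (.inl (i, false)) := by simp [hc']
    have e2 : c' (.inl (i - 1, false)) = c (.inl (i - 1, false)) := by
      simp only [hc', Function.comp]
      rw [Equiv.swap_apply_of_ne_of_ne (by simp) (by simp [hi1])]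
    simp [num, bs, mate, e1, e2, hl]
  have n3 : num c (i, false) ≤ 3 * i.val + 2 := by
    unfold num bs; simp; split_ifs <;> omega
  have n4 : 3 * i.val + 1 ≤ num c' (i, false) := by
    unfold num bs; simp
  have hbp : 0 < b := by omega
  refine ⟨.inl (i, true), .inl (i, false), by simp, ?_, ?_⟩
  · rw [← hc', cost_mob hM hb hτ c hc.1, cost_mob hM hb hτ c' hW]
    apply sub_lt_sub_left
    apply ratio_lt (by positivity) (by positivity)
      (by exact_mod_cast Nat.mul_pos (kk_pos _) hbp) (by exact_mod_cast Nat.mul_pos (kk_pos _) hbp)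
    norm_cast
    rw [n1]
    simp only [kk, if_true]
    simp
    nlinarith
  · rw [← hc', cost_mob hM hb hτ c hc.1, cost_mob hM hb hτ c' hW]
    apply sub_lt_sub_left
    apply ratio_lt (by positivity) (by positivity)
      (by exact_mod_cast Nat.mul_pos (kk_pos _) hbp) (by exact_mod_cast Nat.mul_pos (kk_pos _) hbp)
    norm_cast
    rw [n2]
    simp only [kk, if_true]
    simp
    nlinarith

/-- Number of neighbors of type `T`. -/
def cnt (G : SimpleGraph V) (t : A → Fin k) (p : A → V) (a : A) (T : Fin k) : ℕ :=
  (Finset.univ.filter fun b => G.Adj (p a) (p b) ∧ t b = T).card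

lemma pos_cnt (G : SimpleGraph V) (t : A → Fin k) (p : A → V) (a : A) :
    posCount G t p a = cnt G t p a (t a) := rfl

lemma neg_cnt (G : SimpleGraph V) (t : A → Fin k) (p : A → V) (a : A) :
    negCountOne G t p a = (Finset.univ.filter fun T : Fin k => T ≠ t a).sup (cnt G t p a) := rfl

/-- Transport of costs to colorings. -/
lemma cost_transport {V W A : Type*} [Fintype V] [Fintype W] [Fintype A] {k : ℕ}
    (G : SimpleGraph V) (e : W ≃ V) (t : A → Fin k) (τ : ℝ) (f : A ≃ V) (a : A) :
    costOne (G.comap e) t τ (e.symm ∘ f) a = costOne G (t ∘ f.symm) τ id (f a) := by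
  have key : cnt (G.comap e) t (e.symm ∘ f) a = cnt G (t ∘ f.symm) id (f a) := by
    funext T
    apply Finset.card_equiv f
    intro b
    simp
  have hp : posCount (G.comap e) t (e.symm ∘ f) a = posCount G (t ∘ f.symm) id (f a) := by
    rw [pos_cnt, pos_cnt, key]
    simp
  have hn : negCountOne (G.comap e) t (e.symm ∘ f) a = negCountOne G (t ∘ f.symm) id (f a) := by
    rw [neg_cnt, neg_cnt, key]
    simp
  have hb : nbrs (G.comap e) (e.symm ∘ f) a = ∅ ↔ nbrs G id (f a) = ∅ := by
    unfold nbrs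
    rw [Finset.filter_eq_empty_iff, Finset.filter_eq_empty_iff]
    simp only [Finset.mem_univ, true_imp_iff]
    constructor
    · intro h v hv
      exact h (x := f.symm v) (by simpa using hv)
    · intro h x hx
      exact h (x := f x) (by simpa using hx)
  unfold costOne
  simp only [hp, hn, hb]


/-- For every `τ ∈ (0,1)` there are a graph, three surjectively used agent types on
`|A| = |V|` agents and a bijective placement `p₀` from which no finite sequence of
improving swaps of the `1`-`1`-SSG reaches a swap-stable placement, i.e., the
`1`-`1`-SSG is not weakly acyclic on arbitrary networks. -/
theorem statement5 (τ : ℝ) (hτ0 : 0 < τ) (hτ1 : τ < 1) :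
    ∃ (N : ℕ) (G : SimpleGraph (Fin N)) (t : Fin N → Fin 3) (p₀ : Fin N → Fin N),
      Function.Surjective t ∧ Function.Bijective p₀ ∧
      ¬ ReachesStableSwap (costOne G t τ) p₀ := by
  obtain ⟨b, hb⟩ := exists_nat_ge (max 3 (3 / τ))
  have hb3 : 3 ≤ b := by exact_mod_cast le_trans (le_max_left _ _) hb
  have hbτ : (3 : ℝ) / (3 + b) ≤ τ := by
    have h : 3 / τ ≤ b := le_trans (le_max_right _ _) hb
    rw [div_le_iff₀ hτ0] at h
    rw [div_le_iff₀ (by positivity)]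
    nlinarith
  obtain ⟨M, hM⟩ := exists_nat_ge (max ((3 * b + 7 : ℕ) : ℝ) (6 * τ / (1 - τ) + 1))
  have hM1 : 3 * b + 7 ≤ M := by exact_mod_cast le_trans (le_max_left _ _) hM
  have hMs : ∀ u T, st b u T ≤ M := by
    intro u T
    have := u.1.isLt
    unfold st kk bs
    split_ifs <;> omega
  have hM2 : 6 * τ ≤ ((M : ℝ) - 1) * (1 - τ) := by
    have h : 6 * τ / (1 - τ) + 1 ≤ M := le_trans (le_max_right _ _) hM
    rw [← div_le_iff₀ (by linarith)]
    linarith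
  let e : Fin (Fintype.card (Nd M)) ≃ Nd M := (Fintype.equivFin (Nd M)).symm
  let c0 : Nd M → Fin 3 := Sum.elim (fun u => if u.2 = true then 1 else 2) (fun x => x.1)
  refine ⟨Fintype.card (Nd M), (GG b M).comap e, c0 ∘ e, id, ?_, Function.bijective_id, ?_⟩
  · intro T
    refine ⟨e.symm (.inr (T, ⟨0, by omega⟩)), ?_⟩
    simp [c0]
  rintro ⟨n, q, hq0, hq, hst⟩
  have sw : ∀ (f : Fin (Fintype.card (Nd M)) ≃ Nd M) (x y : Fin (Fintype.card (Nd M))),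
      (c0 ∘ e) ∘ ((Equiv.swap x y).trans f).symm
        = ((c0 ∘ e) ∘ f.symm) ∘ Equiv.swap (f x) (f y) := by
    intro f x y
    funext v
    simp only [Function.comp, Equiv.symm_trans_apply, Equiv.symm_swap]
    congr 2
    simp only [Equiv.swap_apply_def, Equiv.symm_apply_eq]
    split_ifs <;> simp
  have inv : ∀ i ≤ n, ∃ f : Fin (Fintype.card (Nd M)) ≃ Nd M,
      q i = e.symm ∘ f ∧ Good ((c0 ∘ e) ∘ f.symm) := by
    intro i
    induction i with
    | zero =>
      intro _
      refine ⟨e, by rw [hq0]; funext x; simp, ?_⟩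
      have : (c0 ∘ e) ∘ e.symm = c0 := by funext x; simp
      rw [this]
      refine ⟨⟨fun x => rfl, fun u => ?_⟩, fun i => ?_⟩
      · simp only [c0, Sum.elim_inl]
        split_ifs <;> decide
      · simp [c0]
    | succ i ih =>
      intro hi
      obtain ⟨f, hf, hg⟩ := ih (by omega)
      obtain ⟨x, y, hxy, hqq, h1, h2⟩ := hq i (by omega)
      have hqf : q (i + 1) = e.symm ∘ ((Equiv.swap x y).trans f) := by
        rw [hqq, hf]; funext z; simp [Equiv.swap_apply_def]; split_ifs <;> rfl
      refine ⟨(Equiv.swap x y).trans f, hqf, ?_⟩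
      rw [hqf, hf, cost_transport, cost_transport, sw] at h1 h2
      rw [sw]
      simp only [Equiv.trans_apply, Equiv.swap_apply_left, Equiv.swap_apply_right] at h1 h2
      exact good_step hMs hb3 hbτ hτ0 hτ1 hM2 _ hg _ _ h1 h2
  obtain ⟨f, hf, hg⟩ := inv n le_rfl
  obtain ⟨u, v, huv, h1, h2⟩ := good_unstable hMs hb3 hbτ _ hg
  have sw' := sw f (f.symm u) (f.symm v)
  simp only [Equiv.apply_symm_apply] at sw'
  apply hst (e.symm ∘ ((Equiv.swap (f.symm u) (f.symm v)).trans f))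
  refine ⟨f.symm u, f.symm v, by simpa using huv, by rw [hf]; funext z; simp [Equiv.swap_apply_def]; split_ifs <;> rfl, ?_, ?_⟩
  · rw [hf, cost_transport, cost_transport, sw']
    simpa using h1
  · rw [hf, cost_transport, cost_transport, sw']
    simpa using h2

end Schelling
end
end

section
/- Let G = (V,E) be a Δ-regular finite simple graph, let τ ∈ (0,1) with τ ≤ 2/Δ, let A be a set of agents with |A| < |V| partitioned into k ≥ 2 types, and consider the one-versus-all jump Schelling game (1-k-JSG). Fix any real c with 1/2 − 1/(2Δ) < c < 1/2 and, for a placement p, give each edge e = {u,v} ∈ E the weight w_p(e) = 1 if u and v are occupied by agents of different types, w_p(e) = c if exactly one of u, v is occupied, and w_p(e) = 0 otherwise. Then Φ(p) = ∑_{e∈E} w_p(e) is an ordinal potential function: Φ strictly decreases with every improving jump; consequently there is no infinite sequence of improving jumps and improving response dynamics always reach a jump-stable placement. -/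
open Finset
open scoped Classical

noncomputable section

namespace Schelling

variable {V A : Type*} [Fintype V] [Fintype A] {k : ℕ}

/-- The type of the agent occupying node `v` under `p`, if any. -/
def typeAt (t : A → Fin k) (p : A → V) (v : V) : Option (Fin k) :=
  if h : ∃ a, p a = v then some (t h.choose) else none

/-- Weight of a pair of (possibly unoccupied) node contents: `1` for two agents of
different types, `c` if exactly one node is occupied, `0` otherwise. -/
def pairWeight (c : ℝ) (x y : Option (Fin k)) : ℝ :=
  if x = none ∧ y = none then 0
  else if x = none ∨ y = none then c
  else if x = y then 0 else 1

lemma pairWeight_symm (c : ℝ) (x y : Option (Fin k)) :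
    pairWeight c x y = pairWeight c y x := by
  unfold pairWeight
  rcases x with _ | i <;> rcases y with _ | j <;> simp [eq_comm]

/-- The weight `w_p(e)` of an edge `e = {u,v}`. -/
def edgeWeight (c : ℝ) (t : A → Fin k) (p : A → V) : Sym2 V → ℝ :=
  Sym2.lift ⟨fun u v => pairWeight c (typeAt t p u) (typeAt t p v),
    fun _ _ => pairWeight_symm c _ _⟩

/-- The potential `Φ(p) = ∑_{e ∈ E} w_p(e)`. -/
def PhiJump (G : SimpleGraph V) (c : ℝ) (t : A → Fin k) (p : A → V) : ℝ :=
  ∑ᶠ e ∈ G.edgeSet, edgeWeight c t p e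

/-- Generic edge weight for an occupation map. -/
def ew (c : ℝ) (s : V → Option (Fin k)) : Sym2 V → ℝ :=
  Sym2.lift ⟨fun u v => pairWeight c (s u) (s v), fun _ _ => pairWeight_symm c _ _⟩

/-- Generic potential for an occupation map. -/
def Fpot (G : SimpleGraph V) (c : ℝ) (s : V → Option (Fin k)) : ℝ :=
  ∑ e ∈ G.edgeFinset, ew c s e

lemma PhiJump_eq (G : SimpleGraph V) (c : ℝ) (t : A → Fin k) (p : A → V) :
    PhiJump G c t p = Fpot G c (typeAt t p) := by
  unfold PhiJump Fpot
  rw [← finsum_mem_coe_finset]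
  simp only [SimpleGraph.coe_edgeFinset]
  rfl

lemma Fpot_sub (G : SimpleGraph V) (c : ℝ) (s : V → Option (Fin k)) (u : V) :
    Fpot G c s - Fpot G c (Function.update s u none) =
      ∑ w ∈ Finset.univ.filter (fun w => G.Adj u w),
        (pairWeight c (s u) (s w) - pairWeight c none (s w)) := by
  unfold Fpot
  rw [← Finset.sum_sub_distrib]
  have himg : ((Finset.univ.filter (fun w => G.Adj u w)).image (fun w => s(u, w)))
      ⊆ G.edgeFinset := by
    intro e he
    simp only [Finset.mem_image, Finset.mem_filter, Finset.mem_univ, true_and] at he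
    obtain ⟨w, hw, rfl⟩ := he
    simpa using hw
  rw [← Finset.sum_subset himg]
  · rw [Finset.sum_image]
    · apply Finset.sum_congr rfl
      intro w hw
      have hw' : G.Adj u w := by simpa using hw
      have hne : w ≠ u := hw'.ne'
      simp [ew, hne]
    · intro x _ y _ h
      exact Sym2.congr_right.1 h
  · intro e he hn
    induction e using Sym2.ind with
    | _ x y =>
      have hxy : G.Adj x y := by simpa using he
      have hx : x ≠ u := by
        rintro rfl
        exact hn (Finset.mem_image.2 ⟨y, by simpa using hxy, rfl⟩)
      have hy : y ≠ u := by
        rintro rfl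
        exact hn (Finset.mem_image.2 ⟨x, by simpa using hxy.symm, Sym2.eq_swap⟩)
      simp [ew, hx, hy]

lemma typeAt_apply (t : A → Fin k) (p : A → V) (hp : Function.Injective p) (b : A) :
    typeAt t p (p b) = some (t b) := by
  unfold typeAt
  have h : ∃ a, p a = p b := ⟨b, rfl⟩
  rw [dif_pos h, hp h.choose_spec]

lemma typeAt_none (t : A → Fin k) (p : A → V) (v : V) (h : ∀ b, p b ≠ v) :
    typeAt t p v = none := by
  unfold typeAt
  rw [dif_neg]
  rintro ⟨b, hb⟩
  exact h b hb

lemma count_pos (G : SimpleGraph V) (t : A → Fin k) (p : A → V) (hp : Function.Injective p)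
    (a : A) :
    ((Finset.univ.filter (fun w => G.Adj (p a) w)).filter
      (fun w => typeAt t p w = some (t a))).card = posCount G t p a := by
  unfold posCount
  rw [← Finset.card_image_of_injective _ hp]
  congr 1
  ext w
  simp only [Finset.mem_filter, Finset.mem_univ, true_and, Finset.mem_image]
  constructor
  · rintro ⟨h1, h2⟩
    by_cases h : ∃ b, p b = w
    · obtain ⟨b, rfl⟩ := h
      rw [typeAt_apply t p hp] at h2
      exact ⟨b, ⟨h1, by simpa using h2⟩, rfl⟩
    · push Not at h
      rw [typeAt_none t p w h] at h2
      simp at h2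
  · rintro ⟨b, ⟨h1, h2⟩, rfl⟩
    exact ⟨h1, by rw [typeAt_apply t p hp, h2]⟩

lemma count_neg (G : SimpleGraph V) (t : A → Fin k) (p : A → V) (hp : Function.Injective p)
    (a : A) :
    ((Finset.univ.filter (fun w => G.Adj (p a) w)).filter
      (fun w => typeAt t p w ≠ none ∧ typeAt t p w ≠ some (t a))).card
      = negCountAll G t p a := by
  unfold negCountAll
  rw [← Finset.card_image_of_injective _ hp]
  congr 1
  ext w
  simp only [Finset.mem_filter, Finset.mem_univ, true_and, Finset.mem_image]
  constructor
  · rintro ⟨h1, h2, h3⟩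
    by_cases h : ∃ b, p b = w
    · obtain ⟨b, rfl⟩ := h
      rw [typeAt_apply t p hp] at h3
      exact ⟨b, ⟨h1, by simpa using h3⟩, rfl⟩
    · push Not at h
      exact absurd (typeAt_none t p w h) h2
  · rintro ⟨b, ⟨h1, h2⟩, rfl⟩
    rw [typeAt_apply t p hp]
    exact ⟨h1, by simp, by simpa using h2⟩

lemma Phi_formula (G : SimpleGraph V) (Δ : ℕ) (hreg : IsRegular G Δ) (c : ℝ) (t : A → Fin k)
    (p : A → V) (hp : Function.Injective p) (a : A) :
    PhiJump G c t p = Fpot G c (Function.update (typeAt t p) (p a) none)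
      + c * Δ - 2 * c * posCount G t p a + (1 - 2 * c) * negCountAll G t p a := by
  have h := Fpot_sub G c (typeAt t p) (p a)
  rw [← PhiJump_eq, typeAt_apply t p hp] at h
  have h2 : ∀ w, pairWeight c (some (t a)) (typeAt t p w) - pairWeight c none (typeAt t p w)
      = c - 2 * c * (if typeAt t p w = some (t a) then 1 else 0)
        + (1 - 2 * c) * (if typeAt t p w ≠ none ∧ typeAt t p w ≠ some (t a) then 1 else 0) := by
    intro w
    unfold pairWeight
    rcases typeAt t p w with _ | j
    · simp
    · by_cases hj : j = t a
      · subst hj; simp; ring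
      · simp [hj, Ne.symm hj]; ring
  simp only [h2] at h
  rw [Finset.sum_add_distrib, Finset.sum_sub_distrib, ← Finset.mul_sum, ← Finset.mul_sum,
    Finset.sum_boole, Finset.sum_boole, count_pos G t p hp, count_neg G t p hp,
    Finset.sum_const, hreg (p a), nsmul_eq_mul] at h
  linarith

lemma count_le (G : SimpleGraph V) (Δ : ℕ) (hreg : IsRegular G Δ) (t : A → Fin k)
    (p : A → V) (hp : Function.Injective p) (a : A) :
    posCount G t p a + negCountAll G t p a ≤ Δ := by
  rw [← count_pos G t p hp, ← count_neg G t p hp, ← hreg (p a), ← Finset.card_union_of_disjoint]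
  · apply Finset.card_le_card
    intro w
    simp only [Finset.mem_union, Finset.mem_filter]
    tauto
  · rw [Finset.disjoint_left]
    intro w
    simp only [Finset.mem_filter]
    tauto

lemma update_inj {p : A → V} (hp : Function.Injective p) (a : A) (v : V) (hv : ∀ b, p b ≠ v) :
    Function.Injective (Function.update p a v) := by
  intro x y h
  by_cases hx : x = a <;> by_cases hy : y = a
  · rw [hx, hy]
  · subst hx; simp [hy] at h; exact absurd h.symm (hv y)
  · subst hy; simp [hx] at h; exact absurd h (hv x)
  · simp [hx, hy] at h; exact hp h

lemma removed_eq (t : A → Fin k) {p : A → V} (hp : Function.Injective p) (a : A) (v : V)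
    (hv : ∀ b, p b ≠ v) :
    Function.update (typeAt t (Function.update p a v)) v none
      = Function.update (typeAt t p) (p a) none := by
  have hq := update_inj hp a v hv
  funext w
  by_cases hw : w = v
  · subst hw
    have h1 : w ≠ p a := (hv a).symm
    simp [h1, typeAt_none t p w hv]
  · rw [Function.update_of_ne hw]
    by_cases hw2 : w = p a
    · subst hw2
      rw [Function.update_self]
      apply typeAt_none
      intro b
      by_cases hb : b = a
      · subst hb; simpa using Ne.symm hw
      · simp [hb]; exact fun h => hb (hp h)
    · rw [Function.update_of_ne hw2]
      by_cases h : ∃ b, p b = w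
      · obtain ⟨b, rfl⟩ := h
        have hb : b ≠ a := by rintro rfl; exact hw2 rfl
        have := typeAt_apply t _ hq b
        rw [Function.update_of_ne hb] at this
        rw [this, typeAt_apply t p hp]
      · push Not at h
        rw [typeAt_none t p w h, typeAt_none]
        intro b
        by_cases hb : b = a
        · subst hb; simpa using Ne.symm hw
        · simp [hb]; exact h b

lemma nbrs_empty_iff (G : SimpleGraph V) (t : A → Fin k) (p : A → V) (a : A) :
    nbrs G p a = ∅ ↔ posCount G t p a = 0 ∧ negCountAll G t p a = 0 := by
  unfold nbrs posCount negCountAll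
  simp only [Finset.card_eq_zero, Finset.filter_eq_empty_iff, Finset.mem_univ, true_implies]
  constructor
  · intro h
    exact ⟨fun b hb => h hb.1, fun b hb => h hb.1⟩
  · rintro ⟨h1, h2⟩ b hb
    by_cases h : t b = t a
    · exact h1 ⟨hb, h⟩
    · exact h2 ⟨hb, h⟩

lemma cost_eq (G : SimpleGraph V) (t : A → Fin k) (τ : ℝ) (h0 : 0 < τ) (p : A → V) (a : A) :
    costAll G t τ p a = max 0 (τ - (posCount G t p a : ℝ) /
    ((posCount G t p a : ℝ) + (negCountAll G t p a : ℝ))) := by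
  unfold costAll
  split_ifs with h
  · rw [nbrs_empty_iff G t] at h
    simp [h.1, h0.le]
  · rfl

lemma arith (Δ x y x' y' : ℕ) (τ c : ℝ) (hτ0 : 0 < τ) (hτΔ : τ ≤ 2 / (Δ : ℝ))
    (hc1 : 1 / 2 - 1 / (2 * (Δ : ℝ)) < c) (hc2 : c < 1 / 2)
    (h1 : x + y ≤ Δ) (h2 : x' + y' ≤ Δ)
    (h : max 0 (τ - (x' : ℝ) / (x' + y')) < max 0 (τ - (x : ℝ) / (x + y))) :
    0 < (1 - 2 * c) * ((y : ℝ) - y') + 2 * c * ((x' : ℝ) - x) := by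
  have hΔ0 : Δ ≠ 0 := by
    rintro rfl
    simp at hτΔ
    linarith
  have hΔ : (1 : ℝ) ≤ Δ := by exact_mod_cast Nat.one_le_iff_ne_zero.2 hΔ0
  have hΔp : (0 : ℝ) < Δ := by linarith
  have hd : (1 - 2 * c) * Δ < 1 := by
    have e : 1 / (2 * (Δ : ℝ)) * Δ = 1 / 2 := by field_simp
    nlinarith
  have hc0 : 0 < 2 * c := by nlinarith
  have hpos : 0 < τ - (x : ℝ) / (x + y) := by
    by_contra hn
    push Not at hn
    rw [max_eq_left hn] at h
    exact absurd (le_max_left _ _) (not_le.2 h)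
  rw [max_eq_right hpos.le] at h
  have hlt : (x : ℝ) / (x + y) < (x' : ℝ) / (x' + y') := by
    have := lt_of_le_of_lt (le_max_right _ _) h
    linarith
  have hx0 : 0 ≤ (x : ℝ) / (x + y) := by positivity
  have hx' : 1 ≤ x' := by
    rcases Nat.eq_zero_or_pos x' with h | h
    · subst h; simp at hlt; linarith
    · exact h
  by_cases hxx : x < x'
  · have e1 : (1 : ℝ) ≤ (x' : ℝ) - x := by
      have : (x : ℝ) + 1 ≤ x' := by exact_mod_cast hxx
      linarith
    have e2 : (y' : ℝ) ≤ Δ - 1 := by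
      have : (y' : ℝ) + 1 ≤ Δ := by exact_mod_cast (by omega : y' + 1 ≤ Δ)
      linarith
    have e3 : (0 : ℝ) ≤ y := by positivity
    have e4 : 2 * c ≤ 2 * c * ((x' : ℝ) - x) := le_mul_of_one_le_right hc0.le e1
    have e5 : (1 - 2 * c) * (-((Δ : ℝ) - 1)) ≤ (1 - 2 * c) * ((y : ℝ) - y') :=
      mul_le_mul_of_nonneg_left (by linarith) (by linarith)
    nlinarith
  · have hx1 : 1 ≤ x := by omega
    have hxe : x = 1 := by
      by_contra hne
      have hx2 : (2 : ℝ) ≤ x := by exact_mod_cast (by omega : 2 ≤ x)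
      have hs : (x : ℝ) + y ≤ Δ := by exact_mod_cast h1
      have hsp : (0 : ℝ) < x + y := by positivity
      have : 2 / (Δ : ℝ) ≤ (x : ℝ) / (x + y) := div_le_div₀ (by linarith) hx2 hsp hs
      linarith
    have hxe' : x' = 1 := by omega
    subst hxe hxe'
    rw [div_lt_div_iff₀ (by positivity) (by positivity)] at hlt
    have : (y' : ℝ) < y := by push_cast at hlt; linarith
    simp
    exact mul_pos (by linarith) (by linarith)

lemma jump_inj (cost : (A → V) → A → ℝ) {p q : A → V} (hp : Function.Injective p)
    (h : ImprovingJump cost p q) : Function.Injective q := by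
  obtain ⟨a, v, hv, rfl, _⟩ := h
  exact update_inj hp a v hv

lemma jump_dec (G : SimpleGraph V) (Δ : ℕ) (hreg : IsRegular G Δ) (t : A → Fin k)
    (τ : ℝ) (hτ0 : 0 < τ) (hτΔ : τ ≤ 2 / (Δ : ℝ))
    (c : ℝ) (hc1 : 1 / 2 - 1 / (2 * (Δ : ℝ)) < c) (hc2 : c < 1 / 2)
    (p q : A → V) (hp : Function.Injective p) (h : ImprovingJump (costAll G t τ) p q) :
    PhiJump G c t q < PhiJump G c t p := by
  have hq := jump_inj _ hp h
  obtain ⟨a, v, hv, rfl, hcost⟩ := h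
  have e1 := Phi_formula G Δ hreg c t p hp a
  have e2 := Phi_formula G Δ hreg c t _ hq a
  rw [Function.update_self, removed_eq t hp a v hv] at e2
  rw [cost_eq G t τ hτ0, cost_eq G t τ hτ0] at hcost
  have := arith Δ _ _ _ _ τ c hτ0 hτΔ hc1 hc2 (count_le G Δ hreg t p hp a)
    (count_le G Δ hreg t _ hq a) hcost
  linarith

/-- On a `Δ`-regular graph, for the `1`-`k`-JSG with `τ ≤ 2/Δ` and the given edge weights
(`1/2 − 1/(2Δ) < c < 1/2`), `Φ(p) = ∑_{e ∈ E} w_p(e)` strictly decreases with every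
improving jump; consequently there is no infinite sequence of improving jumps, and IRD
always reach a jump-stable placement. -/
theorem statement6 {V A : Type*} [Fintype V] [Fintype A] {k : ℕ}
    (G : SimpleGraph V) (Δ : ℕ) (hreg : IsRegular G Δ)
    (hk : 2 ≤ k) (t : A → Fin k) (ht : Function.Surjective t)
    (hcard : Fintype.card A < Fintype.card V)
    (τ : ℝ) (hτ0 : 0 < τ) (hτ1 : τ < 1) (hτΔ : τ ≤ 2 / (Δ : ℝ))
    (c : ℝ) (hc1 : 1 / 2 - 1 / (2 * (Δ : ℝ)) < c) (hc2 : c < 1 / 2) :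
    (∀ p q : A → V, Function.Injective p → ImprovingJump (costAll G t τ) p q →
        PhiJump G c t q < PhiJump G c t p) ∧
    (¬ ∃ seq : ℕ → A → V, Function.Injective (seq 0) ∧
        ∀ i : ℕ, ImprovingJump (costAll G t τ) (seq i) (seq (i + 1))) ∧
    (∀ p₀ : A → V, Function.Injective p₀ → ReachesStableJump (costAll G t τ) p₀) := by
  have hdec := jump_dec G Δ hreg t τ hτ0 hτΔ c hc1 hc2
  refine ⟨hdec, ?_, ?_⟩
  · rintro ⟨seq, h0, hs⟩
    have hinj : ∀ i, Function.Injective (seq i) := by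
      intro i
      induction i with
      | zero => exact h0
      | succ n ih => exact jump_inj _ ih (hs n)
    have hanti : StrictAnti (fun i => PhiJump G c t (seq i)) :=
      strictAnti_nat_of_succ_lt fun i => hdec _ _ (hinj i) (hs i)
    have hsi : Function.Injective seq := fun i j hij => hanti.injective (by simp [hij])
    exact not_injective_infinite_finite seq hsi
  · let r : (A → V) → (A → V) → Prop := fun x y => PhiJump G c t x < PhiJump G c t y
    haveI : IsTrans (A → V) r := ⟨fun _ _ _ => lt_trans⟩
    haveI : Std.Irrefl r := ⟨fun _ => lt_irrefl _⟩
    have wf : WellFounded r := Finite.wellFounded_of_trans_of_irrefl r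
    intro p₀
    induction p₀ using wf.induction with
    | _ p ih =>
      intro hp
      by_cases hst : JumpStable (costAll G t τ) p
      · exact ⟨0, fun _ => p, rfl, by simp, hst⟩
      · unfold JumpStable at hst
        push Not at hst
        obtain ⟨q, hq⟩ := hst
        obtain ⟨n, s, hs0, hs1, hs2⟩ := ih q (hdec p q hp hq) (jump_inj _ hp hq)
        refine ⟨n + 1, fun i => Nat.casesOn i p s, rfl, ?_, hs2⟩
        intro i hi
        cases i with
        | zero => simpa [hs0] using hq
        | succ j => exact hs1 j (by omega)

end Schelling
end
end

section
/- For every number of types k ≥ 2 and every intolerance parameter τ ∈ (0,1), there exist a finite simple graph G = (V,E), a set A of agents with |A| < |V| partitioned into k types, and an injective placement p₀ : A → V such that no finite sequence of improving jumps of the one-versus-all jump Schelling game (1-k-JSG) with parameter τ starting from p₀ ends in a jump-stable placement; in particular, the 1-k-JSG is not weakly acyclic on arbitrary networks for any τ ∈ (0,1). -/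
open Finset
open scoped Classical

noncomputable section

namespace Schelling

variable {V A : Type*} [Fintype V] [Fintype A] {k : ℕ}

-- BEGIN HELPERS

theorem costAll_eq {τ : ℝ} (hτ : 0 < τ) (G : SimpleGraph V) (t : A → Fin k) (p : A → V) (a : A) :
    costAll G t τ p a = max 0 (τ - (posCount G t p a : ℝ) /
      ((posCount G t p a : ℝ) + (negCountAll G t p a : ℝ))) := by
  unfold costAll
  split_ifs with h
  · have h0 : posCount G t p a = 0 := by
      unfold posCount
      rw [Finset.card_eq_zero, Finset.filter_eq_empty_iff]
      intro b _ hb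
      have : b ∈ nbrs G p a := by simp [nbrs, hb.1]
      simp [h] at this
    rw [h0]
    simp [hτ.le]
  · rfl

theorem costAll_nonneg {τ : ℝ} (hτ : 0 < τ) (G : SimpleGraph V) (t : A → Fin k) (p : A → V)
    (a : A) : 0 ≤ costAll G t τ p a := by
  rw [costAll_eq hτ]; exact le_max_left _ _

theorem not_reaches (c : (A → V) → A → ℝ) (p₀ : A → V) (I : (A → V) → Prop) (h0 : I p₀)
    (hstep : ∀ p q, I p → ImprovingJump c p q → I q)
    (hns : ∀ p, I p → ∃ q, ImprovingJump c p q) : ¬ ReachesStableJump c p₀ := by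
  rintro ⟨n, q, hq0, hq, hs⟩
  have : ∀ i, i ≤ n → I (q i) := by
    intro i
    induction i with
    | zero => intro _; rw [hq0]; exact h0
    | succ i ih => intro hi; exact hstep _ _ (ih (by omega)) (hq i (by omega))
  obtain ⟨r, hr⟩ := hns _ (this n le_rfl)
  exact hs r hr

theorem costAll_transfer {V' A' : Type*} [Fintype V'] [Fintype A'] (e : V' ≃ V) (f : A' ≃ A)
    (τ : ℝ) (hτ : 0 < τ)
    (G : SimpleGraph V) (t : A → Fin k) (p : A' → V') (a : A') :
    costAll (G.comap e) (t ∘ f) τ p a = costAll G t τ (e ∘ p ∘ f.symm) (f a) := by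
  have h1 : posCount (G.comap e) (t ∘ f) p a = posCount G t (e ∘ p ∘ f.symm) (f a) := by
    unfold posCount
    rw [Finset.card_filter, Finset.card_filter, ← Equiv.sum_comp f]
    simp
  have h2 : negCountAll (G.comap e) (t ∘ f) p a = negCountAll G t (e ∘ p ∘ f.symm) (f a) := by
    unfold negCountAll
    rw [Finset.card_filter, Finset.card_filter, ← Equiv.sum_comp f]
    simp
  rw [costAll_eq hτ, costAll_eq hτ, h1, h2]

theorem improving_transfer {V' A' : Type*} [Fintype V'] [Fintype A'] (e : V' ≃ V) (f : A' ≃ A)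
    (τ : ℝ) (hτ : 0 < τ)
    (G : SimpleGraph V) (t : A → Fin k) (p q : A' → V')
    (h : ImprovingJump (costAll (G.comap e) (t ∘ f) τ) p q) :
    ImprovingJump (costAll G t τ) (e ∘ p ∘ f.symm) (e ∘ q ∘ f.symm) := by
  obtain ⟨a, v, h1, h2, h3⟩ := h
  refine ⟨f a, e v, ?_, ?_, ?_⟩
  · intro b
    simpa using h1 (f.symm b)
  · subst h2
    funext b
    by_cases hb : b = f a
    · subst hb; simp
    · have : f.symm b ≠ a := fun h => hb (by rw [← h]; simp)
      simp [Function.update_of_ne hb, Function.update_of_ne this]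
  · rw [costAll_transfer e f τ hτ, costAll_transfer e f τ hτ] at h3
    exact h3

theorem improving_transfer_back {V' A' : Type*} [Fintype V'] [Fintype A'] (e : V' ≃ V)
    (f : A' ≃ A) (τ : ℝ) (hτ : 0 < τ)
    (G : SimpleGraph V) (t : A → Fin k) (p : A' → V') (q : A → V)
    (h : ImprovingJump (costAll G t τ) (e ∘ p ∘ f.symm) q) :
    ImprovingJump (costAll (G.comap e) (t ∘ f) τ) p (e.symm ∘ q ∘ f) := by
  obtain ⟨a, v, h1, h2, h3⟩ := h
  have key : e ∘ (e.symm ∘ q ∘ f) ∘ f.symm = q := by funext b; simp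
  refine ⟨f.symm a, e.symm v, ?_, ?_, ?_⟩
  · intro b hb
    apply h1 (f b)
    simp [hb]
  · subst h2
    funext b
    by_cases hb : b = f.symm a
    · subst hb; simp
    · have : f b ≠ a := fun h => hb (by rw [← h]; simp)
      simp [Function.update_of_ne hb, Function.update_of_ne this]
  · rw [costAll_transfer e f τ hτ, costAll_transfer e f τ hτ, key]
    simpa using h3

/-- Fixed agents: the red hub, the blue clique, the singletons of the further types. -/
abbrev Fx (n k : ℕ) := Unit ⊕ Fin (2 * n + 1) ⊕ Fin (k - 2)

/-- Directed version of the edge relation. -/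
def rel (n k : ℕ) : (Fin 3 ⊕ Fx n k) → (Fin 3 ⊕ Fx n k) → Prop
  | .inl x, .inl y => x = 1 ∧ y = 2
  | .inl x, .inr (.inl _) => x ≠ 2
  | .inl x, .inr (.inr (.inl i)) => x = 1 ∨ (x = 0 ∧ (i : ℕ) < n)
  | .inr (.inr (.inl i)), .inr (.inr (.inl j)) => i ≠ j
  | _, _ => False

def gr (n k : ℕ) : SimpleGraph (Fin 3 ⊕ Fx n k) := SimpleGraph.fromRel (rel n k)

def ty (n k : ℕ) (hk : 2 ≤ k) : (Fin 2 ⊕ Fx n k) → Fin k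
  | .inl _ => ⟨0, by omega⟩
  | .inr (.inl _) => ⟨0, by omega⟩
  | .inr (.inr (.inl _)) => ⟨1, by omega⟩
  | .inr (.inr (.inr e)) => ⟨e + 2, by omega⟩

def plc (n k : ℕ) (m : Fin 2 → Fin 3) : (Fin 2 ⊕ Fx n k) → (Fin 3 ⊕ Fx n k) := Sum.map m id

theorem sum_lt (n : ℕ) : (∑ i : Fin (2 * n + 1), if (i : ℕ) < n then 1 else 0) = n := by
  rw [Fin.sum_univ_eq_sum_range (fun i => if i < n then 1 else 0), ← Finset.card_filter]
  have : (Finset.range (2 * n + 1)).filter (fun i => i < n) = Finset.range n := by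
    ext i; simp; omega
  rw [this]; simp

theorem pos_mob (n k : ℕ) (hk : 2 ≤ k) (m : Fin 2 → Fin 3) (i j : Fin 2) (hij : i ≠ j) :
    posCount (gr n k) (ty n k hk) (plc n k m) (.inl i) =
      (if (m i = 1 ∧ m j = 2) ∨ (m j = 1 ∧ m i = 2) then 1 else 0)
        + (if m i = 2 then 0 else 1) := by
  unfold posCount
  rw [Finset.card_filter]
  simp only [Fintype.sum_sum_type]
  have h : ∀ x y : Fin 3, (x ≠ y ∧ (x = 1 ∧ y = 2 ∨ y = 1 ∧ x = 2)) ↔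
    (x = 1 ∧ y = 2 ∨ y = 1 ∧ x = 2) := by decide
  have h' : ∀ x : Fin 3, ¬ (x = 1 ∧ x = 2) := by decide
  fin_cases i <;> fin_cases j <;>
    simp_all [Fin.sum_univ_two, -Finset.sum_boole, gr, rel, ty, plc, SimpleGraph.fromRel_adj]
  · exact if_congr ⟨fun h' => h'.2, fun h' => ⟨h _ _ h', h'⟩⟩ rfl rfl
  · exact if_congr ⟨fun h' => h'.2, fun h' => ⟨h _ _ h', h'⟩⟩ rfl rfl

theorem neg_mob (n k : ℕ) (hk : 2 ≤ k) (m : Fin 2 → Fin 3) (i : Fin 2) :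
    negCountAll (gr n k) (ty n k hk) (plc n k m) (.inl i) =
      (if m i = 0 then n else if m i = 1 then 2 * n + 1 else 0) := by
  unfold negCountAll
  rw [Finset.card_filter]
  simp only [Fintype.sum_sum_type]
  have h := sum_lt n
  generalize hx : m i = x
  fin_cases x <;>
    simp_all [gr, rel, ty, plc, SimpleGraph.fromRel_adj]

theorem cost_blue (n k : ℕ) (hk : 2 ≤ k) (τ : ℝ) (hτ0 : 0 < τ) (hn : τ ≤ n / (n + 1))
    (m : Fin 2 → Fin 3) (u : Fin (2 * n + 1)) :
    costAll (gr n k) (ty n k hk) τ (plc n k m) (.inr (.inr (.inl u))) = 0 := by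
  have hp : posCount (gr n k) (ty n k hk) (plc n k m) (.inr (.inr (.inl u))) = 2 * n := by
    unfold posCount
    rw [Finset.card_filter]
    simp only [Fintype.sum_sum_type]
    have : ∀ v, (u ≠ v ∧ (u ≠ v ∨ v ≠ u)) ↔ v ≠ u := by intro v; tauto
    have h2 : (∑ v : Fin (2 * n + 1), if v = u then 0 else 1) = 2 * n := by
      simp_rw [← ite_not (p := _ = u), ← Finset.card_filter]
      rw [Finset.filter_ne' , Finset.card_erase_of_mem (by simp)]; simp
    simp_all [gr, rel, ty, plc, SimpleGraph.fromRel_adj]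
  have hq : negCountAll (gr n k) (ty n k hk) (plc n k m) (.inr (.inr (.inl u))) ≤ 2 := by
    unfold negCountAll
    rw [Finset.card_filter]
    simp only [Fintype.sum_sum_type]
    simp [gr, rel, ty, plc, SimpleGraph.fromRel_adj]
    exact (Finset.card_le_univ _).trans (by simp)
  rw [costAll_eq hτ0, hp]
  apply max_eq_left
  rw [sub_nonpos]
  refine hn.trans ?_
  have hq' : (negCountAll (gr n k) (ty n k hk) (plc n k m) (.inr (.inr (.inl u))) : ℝ) ≤ 2 := by
    exact_mod_cast hq
  have hn0 : (0:ℝ) < n := by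
    rcases Nat.eq_zero_or_pos n with h | h
    · subst h; simp at hn; linarith
    · exact_mod_cast h
  push_cast
  rw [div_le_div_iff₀ (by positivity) (by positivity)]
  nlinarith

theorem cost_hub (n k : ℕ) (hk : 2 ≤ k) (τ : ℝ) (hτ0 : 0 < τ) (hτ1 : τ < 1)
    (m : Fin 2 → Fin 3) (hm : Function.Injective m) :
    costAll (gr n k) (ty n k hk) τ (plc n k m) (.inr (.inl ())) = 0 := by
  have hp : posCount (gr n k) (ty n k hk) (plc n k m) (.inr (.inl ())) ≠ 0 := by
    have h01 : m 0 ≠ m 1 := fun h => absurd (hm h) (by decide)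
    unfold posCount
    rw [Finset.card_filter]
    simp only [Fintype.sum_sum_type]
    simp [gr, rel, ty, plc, SimpleGraph.fromRel_adj]
    intro h h'
    exact h01 (h.trans h'.symm)
  have hq : negCountAll (gr n k) (ty n k hk) (plc n k m) (.inr (.inl ())) = 0 := by
    unfold negCountAll
    rw [Finset.card_filter]
    simp only [Fintype.sum_sum_type]
    simp [gr, rel, ty, plc, SimpleGraph.fromRel_adj]
  rw [costAll_eq hτ0, hq]
  have : (posCount (gr n k) (ty n k hk) (plc n k m) (.inr (.inl ())) : ℝ) ≠ 0 := by
    exact_mod_cast hp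
  simp [div_self this, hτ1.le]

theorem cost_extra (n k : ℕ) (hk : 2 ≤ k) (τ : ℝ) (hτ0 : 0 < τ)
    (p : (Fin 2 ⊕ Fx n k) → (Fin 3 ⊕ Fx n k)) (u : Fin (k - 2)) :
    costAll (gr n k) (ty n k hk) τ p (.inr (.inr (.inr u))) = τ := by
  have hp : posCount (gr n k) (ty n k hk) p (.inr (.inr (.inr u))) = 0 := by
    unfold posCount
    rw [Finset.card_eq_zero, Finset.filter_eq_empty_iff]
    rintro b _ ⟨h1, h2⟩
    have hb : b = .inr (.inr (.inr u)) := by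
      rcases b with b | b | b | b <;> simp [ty, Fin.ext_iff] at h2 ⊢
      exact h2
    subst hb
    exact (gr n k).irrefl h1
  rw [costAll_eq hτ0, hp]
  simp [hτ0.le]

/-- The invariant: two mobile agents on two different special nodes, the others at home. -/
def Inv (n k : ℕ) (p : (Fin 2 ⊕ Fx n k) → (Fin 3 ⊕ Fx n k)) : Prop :=
  ∃ m : Fin 2 → Fin 3, Function.Injective m ∧ p = plc n k m

theorem upd_plc (n k : ℕ) [inst : DecidableEq (Fin 2 ⊕ Fx n k)] (m : Fin 2 → Fin 3) (i : Fin 2) (x : Fin 3) :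
    Function.update (plc n k m) (.inl i) (.inl x) = plc n k (Function.update m i x) := by
  funext b
  rcases b with b | b
  · by_cases h : b = i
    · subst h; simp [plc]
    · simp [plc, h]
  · simp [plc]

theorem inv_step (n k : ℕ) (hk : 2 ≤ k) (τ : ℝ) (hτ0 : 0 < τ) (hτ1 : τ < 1)
    (hn : τ ≤ n / (n + 1)) (p q : (Fin 2 ⊕ Fx n k) → (Fin 3 ⊕ Fx n k)) (hp : Inv n k p)
    (h : ImprovingJump (costAll (gr n k) (ty n k hk) τ) p q) : Inv n k q := by
  obtain ⟨m, hm, rfl⟩ := hp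
  obtain ⟨a, v, h1, h2, h3⟩ := h
  have hc := costAll_nonneg hτ0 (gr n k) (ty n k hk) q a
  rcases a with i | a | a | a
  · rcases v with x | v
    · rw [upd_plc] at h2
      refine ⟨_, ?_, h2⟩
      have hx : ∀ b, m b ≠ x := fun b hb => h1 (.inl b) (by simp [plc, hb])
      intro b c hbc
      by_cases hb : b = i <;> by_cases hc : c = i
      · rw [hb, hc]
      · subst hb; simp [Function.update_of_ne hc] at hbc; exact absurd hbc.symm (hx c)
      · subst hc; simp [Function.update_of_ne hb] at hbc; exact absurd hbc (hx b)
      · simp [Function.update_of_ne hb, Function.update_of_ne hc] at hbc; exact hm hbc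
    · exact absurd rfl (h1 (.inr v))
  · rw [cost_hub n k hk τ hτ0 hτ1 m hm] at h3; linarith
  · rw [cost_blue n k hk τ hτ0 hn m] at h3; linarith
  · rw [cost_extra n k hk τ hτ0, cost_extra n k hk τ hτ0] at h3; linarith

theorem exists_pair : ∀ m : Fin 2 → Fin 3, Function.Injective m → ∃ i j : Fin 2, i ≠ j ∧
    ((m i = 1 ∧ m j = 2) ∨ (m i = 2 ∧ m j = 0) ∨ (m i = 0 ∧ m j = 1)) := by
  intro m hm
  have h01 : m 0 ≠ m 1 := fun h => absurd (hm h) (by decide)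
  have key : ∀ x y : Fin 3, x ≠ y → 
    ((x = 1 ∧ y = 2) ∨ (x = 2 ∧ y = 0) ∨ (x = 0 ∧ y = 1)) ∨
    ((y = 1 ∧ x = 2) ∨ (y = 2 ∧ x = 0) ∨ (y = 0 ∧ x = 1)) := by decide
  rcases key _ _ h01 with h | h
  · exact ⟨0, 1, by decide, h⟩
  · exact ⟨1, 0, by decide, h⟩

theorem inv_exit (n k : ℕ) (hk : 2 ≤ k) (τ : ℝ) (hτ0 : 0 < τ) (hτ1 : τ < 1) (hn0 : 0 < n)
    (hn : 1 / ((n : ℝ) + 1) < τ) (p : (Fin 2 ⊕ Fx n k) → (Fin 3 ⊕ Fx n k)) (hp : Inv n k p) :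
    ∃ q, ImprovingJump (costAll (gr n k) (ty n k hk) τ) p q := by
  obtain ⟨m, hm, rfl⟩ := hp
  obtain ⟨i, j, hij, h⟩ := exists_pair m hm
  have mk : ∀ x : Fin 3, m i ≠ x → m j ≠ x →
      costAll (gr n k) (ty n k hk) τ (plc n k (Function.update m i x)) (.inl i) <
        costAll (gr n k) (ty n k hk) τ (plc n k m) (.inl i) →
      ∃ q, ImprovingJump (costAll (gr n k) (ty n k hk) τ) (plc n k m) q := by
    intro x h1 h2 h3
    refine ⟨_, .inl i, .inl x, ?_, (upd_plc n k (inst := _) m i x).symm, h3⟩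
    rintro (b | b) hb
    · have hb' : m b = x := by simpa [plc] using hb
      have : b = i ∨ b = j := by omega
      rcases this with rfl | rfl
      · exact h1 hb'
      · exact h2 hb'
    · simp [plc] at hb
  have hn0' : (0 : ℝ) < n := by exact_mod_cast hn0
  rcases h with ⟨hi, hj⟩ | ⟨hi, hj⟩ | ⟨hi, hj⟩
  · apply mk 0 (by simp [hi]) (by simp [hj])
    rw [costAll_eq hτ0, costAll_eq hτ0, pos_mob n k hk _ i j hij, pos_mob n k hk _ i j hij,
      neg_mob, neg_mob]
    simp [hi, hj, Function.update_of_ne hij.symm]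
    have e1 : (2 : ℝ) / (2 + (2 * n + 1)) < 1 / (n + 1) := by
      rw [div_lt_div_iff₀ (by positivity) (by positivity)]; linarith
    norm_num at e1 hn ⊢
    have e2 : (1 + (n:ℝ))⁻¹ = (n + 1 : ℝ)⁻¹ := by rw [add_comm]
    rw [e2]
    constructor <;> first | (left; linarith) | (right; linarith) | linarith
  · apply mk 1 (by simp [hi]) (by simp [hj])
    rw [costAll_eq hτ0, costAll_eq hτ0, pos_mob n k hk _ i j hij, pos_mob n k hk _ i j hij,
      neg_mob, neg_mob]
    simp [hi, hj, Function.update_of_ne hij.symm]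
    refine ⟨hτ0, ?_⟩
    positivity
  · apply mk 2 (by simp [hi]) (by simp [hj])
    rw [costAll_eq hτ0, costAll_eq hτ0, pos_mob n k hk _ i j hij, pos_mob n k hk _ i j hij,
      neg_mob, neg_mob]
    simp [hi, hj, Function.update_of_ne hij.symm]
    norm_num at hn
    have e2 : (1 + (n:ℝ))⁻¹ = (n + 1 : ℝ)⁻¹ := by rw [add_comm]
    rw [e2]
    constructor <;> first | (left; linarith) | (right; linarith) | linarith


/-- For every `k ≥ 2` and every `τ ∈ (0,1)` there are a graph, `k` surjectively used agent
types on `|A| < |V|` agents and an injective placement `p₀` from which no finite sequence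
of improving jumps of the `1`-`k`-JSG reaches a jump-stable placement, i.e., the
`1`-`k`-JSG is not weakly acyclic on arbitrary networks. -/
theorem statement8 (k : ℕ) (hk : 2 ≤ k) (τ : ℝ) (hτ0 : 0 < τ) (hτ1 : τ < 1) :
    ∃ (N M : ℕ) (G : SimpleGraph (Fin N)) (t : Fin M → Fin k) (p₀ : Fin M → Fin N),
      M < N ∧ Function.Surjective t ∧ Function.Injective p₀ ∧
      ¬ ReachesStableJump (costAll G t τ) p₀ := by
  obtain ⟨n, hn⟩ := exists_nat_one_div_lt (lt_min hτ0 (sub_pos.2 hτ1))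
  obtain ⟨ha, hb⟩ := lt_min_iff.1 hn
  have hpos : (0 : ℝ) < n + 1 := by positivity
  have hle : τ ≤ n / (n + 1) := by
    have : (n : ℝ) / (n + 1) = 1 - 1 / (n + 1) := by field_simp; ring
    rw [this]; linarith
  have hn0 : 0 < n := by
    rcases Nat.eq_zero_or_pos n with h | h
    · subst h; simp at hle; linarith
    · exact h
  let e := (Fintype.equivFin (Fin 3 ⊕ Fx n k)).symm
  let f := (Fintype.equivFin (Fin 2 ⊕ Fx n k)).symm
  let m₀ : Fin 2 → Fin 3 := Fin.castSucc
  have hm₀ : Function.Injective m₀ := Fin.castSucc_injective 2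
  have key : ∀ p : (Fin 2 ⊕ Fx n k) → (Fin 3 ⊕ Fx n k),
      e ∘ (e.symm ∘ p ∘ f) ∘ f.symm = p := by intro p; funext b; simp
  refine ⟨_, _, (gr n k).comap e, ty n k hk ∘ f, e.symm ∘ plc n k m₀ ∘ f, ?_, ?_, ?_, ?_⟩
  · simp only [Fintype.card_sum, Fintype.card_fin]; omega
  · apply Function.Surjective.comp _ f.surjective
    intro x
    by_cases h0 : (x : ℕ) = 0
    · exact ⟨.inl 0, by ext; simp [ty, h0]⟩
    by_cases h1 : (x : ℕ) = 1
    · exact ⟨.inr (.inr (.inl 0)), by ext; simp [ty, h1]⟩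
    · exact ⟨.inr (.inr (.inr ⟨x - 2, by omega⟩)), by ext; simp [ty]; omega⟩
  · exact e.symm.injective.comp
      ((Sum.map_injective.2 ⟨hm₀, Function.injective_id⟩).comp f.injective)
  · apply not_reaches _ _ (fun p => Inv n k (e ∘ p ∘ f.symm))
    · show Inv n k _
      rw [key]; exact ⟨m₀, hm₀, rfl⟩
    · intro p q hp hq
      exact inv_step n k hk τ hτ0 hτ1 hle _ _ hp (improving_transfer e f τ hτ0 _ _ p q hq)
    · intro p hp
      obtain ⟨q, hq⟩ := inv_exit n k hk τ hτ0 hτ1 hn0 ha _ hp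
      exact ⟨_, improving_transfer_back e f τ hτ0 _ _ p q hq⟩

end Schelling
end
end
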